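/- arXiv:1908.05283 — 2 statements merged into one kernel-verified Lean document; each statement's English description precedes it below -/
import Mathlib

section
/- Let v : Ω → ℝ satisfy ((H + K·I)v)(α) ≥ 0 for every α ∈ Ω, and suppose there exists β ∈ Ω with ((H + K·I)v)(β) > 0. Then v(α) > 0 for every α ∈ Ω. (Lemma 1, strict positivity part; uses connectedness of G.) -/
open Matrix Finset

/-!
At an index `i` where `v` attains its minimum, rewrite
`(A v) i = (∑ j, A i j) * v i + ∑ j, A i j * (v j - v i)`. If the minimum is nonpositive, both
summands are nonpositive, so `0 ≤ (A v) i` forces `v j = v i` whenever `A i j < 0`. By connectedness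
`v` is then a nonpositive constant, and `A v`, which is that constant times the row sums of `A`,
is nowhere positive.
-/

section MinimumPrinciple

variable {n R : Type*} [Fintype n] [Ring R] {A : Matrix n n R} {v : n → R}

theorem mulVec_apply_eq_rowSum_mul_add_sum_mul_sub (A : Matrix n n R) (v : n → R) (i : n) :
    (A *ᵥ v) i = (∑ j, A i j) * v i + ∑ j, A i j * (v j - v i) := by
  simp only [mulVec, dotProduct, mul_sub, sum_sub_distrib, sum_mul, add_sub_cancel]

variable [LinearOrder R] [IsStrictOrderedRing R]

theorem eq_of_isMin_of_nonpos_of_mulVec_nonneg (hoff : Pairwise fun i j => A i j ≤ 0) {i : n}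
    (hrow : 0 ≤ ∑ j, A i j) (hmin : ∀ j, v i ≤ v j) (hvi : v i ≤ 0) (hAv : 0 ≤ (A *ᵥ v) i)
    {j : n} (hij : A i j < 0) : v j = v i := by
  have hterm : ∀ k ∈ univ, A i k * (v k - v i) ≤ 0 := by
    intro k _
    obtain rfl | hik := eq_or_ne i k
    · simp
    · exact mul_nonpos_of_nonpos_of_nonneg (hoff hik) (sub_nonneg.2 (hmin k))
  have hsum : ∑ k, A i k * (v k - v i) = 0 := by
    rw [mulVec_apply_eq_rowSum_mul_add_sum_mul_sub] at hAv
    have hfirst : (∑ k, A i k) * v i ≤ 0 := mul_nonpos_of_nonneg_of_nonpos hrow hvi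
    exact (sum_nonpos hterm).antisymm (hAv.trans (add_le_of_nonpos_left hfirst))
  have hzero : A i j * (v j - v i) = 0 := (sum_eq_zero_iff_of_nonpos hterm).1 hsum j (mem_univ j)
  exact sub_eq_zero.1 ((mul_eq_zero.1 hzero).resolve_left hij.ne)

theorem eq_of_reflTransGen_of_isMin_of_nonpos (hoff : Pairwise fun i j => A i j ≤ 0)
    (hrow : ∀ i, 0 ≤ ∑ j, A i j) (hAv : ∀ i, 0 ≤ (A *ᵥ v) i) {i j : n}
    (hmin : ∀ k, v i ≤ v k) (hvi : v i ≤ 0)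
    (hij : Relation.ReflTransGen (fun k l => A k l < 0) i j) : v j = v i := by
  induction hij with
  | refl => rfl
  | @tail k l _ hkl hk =>
    rw [← hk] at hmin hvi ⊢
    exact eq_of_isMin_of_nonpos_of_mulVec_nonneg hoff (hrow k) hmin hvi (hAv k) hkl

theorem mbll_strict_positivity_general (hoff : Pairwise fun i j => A i j ≤ 0)
    (hrow : ∀ i, 0 ≤ ∑ j, A i j)
    (hconn : ∀ i j, Relation.ReflTransGen (fun k l => A k l < 0) i j)
    (hAv : ∀ i, 0 ≤ (A *ᵥ v) i) (hstrict : ∃ i, 0 < (A *ᵥ v) i) (i : n) : 0 < v i := by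
  by_contra! hvi
  have : Nonempty n := ⟨i⟩
  obtain ⟨m, hmin⟩ := Finite.exists_min v
  have hvm : v m ≤ 0 := (hmin i).trans hvi
  have hconst : ∀ j, v j = v m := fun j =>
    eq_of_reflTransGen_of_isMin_of_nonpos hoff hrow hAv hmin hvm (hconn m j)
  obtain ⟨b, hb⟩ := hstrict
  refine hb.not_ge ?_
  calc (A *ᵥ v) b = (∑ j, A b j) * v m := by
        simp only [mulVec, dotProduct, hconst, sum_mul]
    _ ≤ 0 := mul_nonpos_of_nonneg_of_nonpos (hrow b) hvm

end MinimumPrinciple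

section HoppingHamiltonian

variable {Ω R : Type*} [DecidableEq Ω] [Ring R] {G : SimpleGraph Ω} [DecidableRel G.Adj]
  {t : R} {V : Ω → R}

/-- The Hamiltonian of a particle hopping along the edges of `G` with amplitude `t` in the
potential `V`. A constant energy shift is absorbed into `V`. -/
def hoppingHamiltonian (G : SimpleGraph Ω) [DecidableRel G.Adj] (t : R) (V : Ω → R) :
    Matrix Ω Ω R :=
  diagonal V - t • G.adjMatrix R

theorem hoppingHamiltonian_apply (α β : Ω) :
    hoppingHamiltonian G t V α β = if α = β then V α else if G.Adj α β then -t else 0 := by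
  obtain rfl | hne := eq_or_ne α β
  · simp [hoppingHamiltonian]
  · by_cases hadj : G.Adj α β <;> simp [hoppingHamiltonian, hne, hadj]

theorem hoppingHamiltonian_apply_of_adj {α β : Ω} (h : G.Adj α β) :
    hoppingHamiltonian G t V α β = -t := by
  rw [hoppingHamiltonian_apply, if_neg h.ne, if_pos h]

theorem hoppingHamiltonian_add_smul_one (K : R) :
    hoppingHamiltonian G t V + K • (1 : Matrix Ω Ω R) =
      hoppingHamiltonian G t fun α => K + V α := by
  rw [hoppingHamiltonian, hoppingHamiltonian, smul_one_eq_diagonal, sub_add_eq_add_sub,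
    diagonal_add]
  simp only [add_comm]

theorem sum_hoppingHamiltonian_apply [Fintype Ω] (α : Ω) :
    ∑ β, hoppingHamiltonian G t V α β = V α - t * G.degree α := by
  simp only [hoppingHamiltonian, Matrix.sub_apply, Matrix.smul_apply, smul_eq_mul,
    diagonal_apply, SimpleGraph.adjMatrix_apply, sum_sub_distrib, sum_ite_eq, mem_univ, if_true,
    ← mul_sum, SimpleGraph.degree_eq_sum_if_adj]

variable [LinearOrder R] [IsStrictOrderedRing R]

theorem pairwise_hoppingHamiltonian_nonpos (ht : 0 ≤ t) :
    Pairwise fun α β => hoppingHamiltonian G t V α β ≤ 0 := by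
  intro α β hne
  rw [hoppingHamiltonian_apply, if_neg hne]
  split_ifs
  exacts [neg_nonpos.2 ht, le_rfl]

theorem reflTransGen_hoppingHamiltonian_neg (hG : G.Preconnected) (ht : 0 < t) (α β : Ω) :
    Relation.ReflTransGen (fun γ δ => hoppingHamiltonian G t V γ δ < 0) α β := by
  have hneg : ∀ γ δ, G.Adj γ δ → hoppingHamiltonian G t V γ δ < 0 := fun γ δ hadj => by
    rw [hoppingHamiltonian_apply_of_adj hadj]
    exact neg_neg_of_pos ht
  exact Relation.ReflTransGen.mono hneg α β
    ((SimpleGraph.reachable_iff_reflTransGen α β).1 (hG α β))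

theorem pos_of_hoppingHamiltonian_mulVec_nonneg [Fintype Ω] (hG : G.Preconnected) (ht : 0 < t)
    (hV : ∀ α, t * G.degree α ≤ V α) {v : Ω → R}
    (hv : ∀ α, 0 ≤ (hoppingHamiltonian G t V *ᵥ v) α)
    (hstrict : ∃ β, 0 < (hoppingHamiltonian G t V *ᵥ v) β) (α : Ω) : 0 < v α := by
  have hrow : ∀ β, 0 ≤ ∑ γ, hoppingHamiltonian G t V β γ := fun β => by
    rw [sum_hoppingHamiltonian_apply]
    exact sub_nonneg.2 (hV β)
  exact mbll_strict_positivity_general (pairwise_hoppingHamiltonian_nonpos ht.le) hrow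
    (reflTransGen_hoppingHamiltonian_neg hG ht) hv hstrict α

end HoppingHamiltonian

/-- **Lemma 1, strict positivity part**: if `((H + K·I) v) α ≥ 0` for all `α` and
`((H + K·I) v) β > 0` for some `β`, then `v α > 0` for all `α`
(uses connectedness of the Fock-space graph `G`). -/
theorem mbll_strict_positivity
    {Ω : Type*} [Fintype Ω] [DecidableEq Ω] [Nonempty Ω]
    (G : SimpleGraph Ω) [DecidableRel G.Adj] (hG : G.Connected)
    (t : ℝ) (ht : 0 < t) (V : Ω → ℝ) (K : ℝ)
    (H : Matrix Ω Ω ℝ)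
    (hH : ∀ α β, H α β = if α = β then V α else if G.Adj α β then -t else 0)
    (hK : ∀ α, 0 ≤ K + V α - t * (G.degree α + 1))
    (v : Ω → ℝ)
    (hv : ∀ α, 0 ≤ ((H + K • (1 : Matrix Ω Ω ℝ)) *ᵥ v) α)
    (hstrict : ∃ β, 0 < ((H + K • (1 : Matrix Ω Ω ℝ)) *ᵥ v) β) :
    ∀ α, 0 < v α := by
  obtain rfl : H = hoppingHamiltonian G t V := by
    ext α β
    rw [hH, hoppingHamiltonian_apply]
  rw [hoppingHamiltonian_add_smul_one] at hv hstrict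
  exact pos_of_hoppingHamiltonian_mulVec_nonneg hG.preconnected ht
    (fun α => by linarith [hK α]) hv hstrict
end

section
/- Let ψ : Ω → ℝ be an eigenvector of H with eigenvalue E and set E' := E + K. Then there exists α ∈ Ω with 1/u(α) ≤ E'; equivalently, E' ≥ min_{α∈Ω} 1/u(α). (The classically allowed region of the effective potential 1/u at energy E' is nonempty.) -/
open Matrix Finset

/-!
Let `c` be the largest value of `|ψ| / u`, attained at `α`, and replace `ψ` by `-ψ` if necessary so
that `ψ α = c * u α`. Then `ψ ≤ c • u` with equality at `α`. As `A = H + K • 1` has nonpositive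
off-diagonal entries, applying it reverses the inequality at the contact point:
`c = c * (A *ᵥ u) α ≤ (A *ᵥ ψ) α = (E + K) * c * u α`.
-/

/-- A Z-matrix: a square matrix all of whose off-diagonal entries are nonpositive. It abstracts the
sign of the hopping term of the Hamiltonian. -/
def IsZMatrix {n R : Type*} [Zero R] [LE R] (A : Matrix n n R) : Prop :=
  Pairwise fun i j => A i j ≤ 0

namespace IsZMatrix

section Ring

variable {n R : Type*} [Ring R] [PartialOrder R] {A : Matrix n n R}

theorem add_smul_one [DecidableEq n] (hA : IsZMatrix A) (k : R) :
    IsZMatrix (A + k • (1 : Matrix n n R)) := by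
  intro i j hij
  simpa [one_apply_ne hij] using hA hij

theorem mulVec_apply_nonpos [Fintype n] [IsOrderedRing R] (hA : IsZMatrix A) {v : n → R}
    (hv : 0 ≤ v) {i : n} (hvi : v i = 0) : (A *ᵥ v) i ≤ 0 := by
  refine sum_nonpos fun j _ => ?_
  obtain rfl | hij := eq_or_ne i j
  · rw [hvi, mul_zero]
  · exact mul_nonpos_of_nonpos_of_nonneg (hA hij) (hv j)

theorem mulVec_apply_le_of_le_of_eq [Fintype n] [IsOrderedRing R] (hA : IsZMatrix A)
    {v w : n → R} (hvw : v ≤ w) {i : n} (hi : v i = w i) : (A *ᵥ w) i ≤ (A *ᵥ v) i := by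
  have hdiff : (A *ᵥ (w - v)) i ≤ 0 :=
    hA.mulVec_apply_nonpos (sub_nonneg.2 hvw) (sub_eq_zero.2 hi.symm)
  rwa [mulVec_sub, Pi.sub_apply, sub_nonpos] at hdiff

end Ring

theorem mulVec_apply_le_of_eigenvector_le {n R : Type*} [Fintype n] [CommRing R] [LinearOrder R]
    [IsStrictOrderedRing R] {A : Matrix n n R} {u ψ : n → R} {μ c : R} (hA : IsZMatrix A)
    (hψ : A *ᵥ ψ = μ • ψ) (hc : 0 < c) (hle : ψ ≤ c • u) {i : n} (hi : ψ i = c * u i) :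
    (A *ᵥ u) i ≤ μ * u i := by
  refine le_of_mul_le_mul_left ?_ hc
  calc c * (A *ᵥ u) i = (A *ᵥ (c • u)) i := by rw [mulVec_smul, Pi.smul_apply, smul_eq_mul]
    _ ≤ (A *ᵥ ψ) i := hA.mulVec_apply_le_of_le_of_eq hle hi
    _ = c * (μ * u i) := by rw [hψ, Pi.smul_apply, smul_eq_mul, hi, mul_left_comm]

end IsZMatrix

theorem mulVec_inv_mulVec_of_ne_zero {n R : Type*} [Fintype n] [DecidableEq n] [CommRing R]
    {A : Matrix n n R} {b : n → R} (h : A⁻¹ *ᵥ b ≠ 0) : A *ᵥ (A⁻¹ *ᵥ b) = b := by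
  -- The inverse of a singular matrix is the junk value `0`.
  have hdet : IsUnit A.det := by
    by_contra hsing
    exact h (by rw [nonsing_inv_apply_not_isUnit A hsing, zero_mulVec])
  rw [mulVec_mulVec, mul_nonsing_inv A hdet, one_mulVec]

section Field

variable {n 𝕜 : Type*} [Field 𝕜] [LinearOrder 𝕜] [IsStrictOrderedRing 𝕜]

theorem exists_abs_le_smul_and_abs_eq [Finite n] {u ψ : n → 𝕜} (hu : ∀ i, 0 < u i) (hψ : ψ ≠ 0) :
    ∃ c > 0, |ψ| ≤ c • u ∧ ∃ i, |ψ i| = c * u i := by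
  obtain ⟨k, hk⟩ := Function.ne_iff.1 hψ
  have : Nonempty n := ⟨k⟩
  obtain ⟨i, hmax⟩ := Finite.exists_max fun j => |ψ j| / u j
  refine ⟨|ψ i| / u i, ?_, fun j => ?_, i, (div_mul_cancel₀ _ (hu i).ne').symm⟩
  · exact (div_pos (abs_pos.2 hk) (hu k)).trans_le (hmax k)
  · exact (div_le_iff₀ (hu j)).1 (hmax j)

variable [Fintype n]

theorem IsZMatrix.exists_mulVec_apply_le_eigenvalue_mul {A : Matrix n n 𝕜} {u ψ : n → 𝕜} {μ : 𝕜}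
    (hA : IsZMatrix A) (hu : ∀ i, 0 < u i) (hψ0 : ψ ≠ 0) (hψ : A *ᵥ ψ = μ • ψ) :
    ∃ i, (A *ᵥ u) i ≤ μ * u i := by
  obtain ⟨c, hc, hle, i, hi⟩ := exists_abs_le_smul_and_abs_eq hu hψ0
  refine ⟨i, ?_⟩
  obtain hpos | hneg := abs_choice (ψ i)
  · exact hA.mulVec_apply_le_of_eigenvector_le hψ hc ((le_abs_self ψ).trans hle)
      (hpos.symm.trans hi)
  · exact hA.mulVec_apply_le_of_eigenvector_le (ψ := -ψ) (by rw [mulVec_neg, hψ, smul_neg]) hc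
      ((neg_le_abs ψ).trans hle) (hneg.symm.trans hi)

theorem mbll_classically_allowed_nonempty_general [DecidableEq n] {H : Matrix n n 𝕜}
    (hH : IsZMatrix H) {K : 𝕜} {u : n → 𝕜}
    (hu : u = (H + K • (1 : Matrix n n 𝕜))⁻¹ *ᵥ (fun _ => 1)) (hupos : ∀ i, 0 < u i)
    {ψ : n → 𝕜} (hψ0 : ψ ≠ 0) {E : 𝕜} (hψ : H *ᵥ ψ = E • ψ) :
    ∃ i, 1 / u i ≤ E + K := by
  have hψK : (H + K • (1 : Matrix n n 𝕜)) *ᵥ ψ = (E + K) • ψ := by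
    rw [add_mulVec, smul_mulVec, one_mulVec, hψ, add_smul]
  obtain ⟨i, hi⟩ := (hH.add_smul_one K).exists_mulVec_apply_le_eigenvalue_mul hupos hψ0 hψK
  have hu0 : u ≠ 0 := fun h => (hupos i).ne' (congrFun h i)
  have hlandscape : (H + K • (1 : Matrix n n 𝕜)) *ᵥ u = fun _ => 1 := by
    rw [hu] at hu0 ⊢
    exact mulVec_inv_mulVec_of_ne_zero hu0
  rw [hlandscape] at hi
  exact ⟨i, (div_le_iff₀ (hupos i)).2 hi⟩

end Field

theorem isZMatrix_of_hopping {Ω R : Type*} [DecidableEq Ω] [AddCommGroup R] [PartialOrder R]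
    [IsOrderedAddMonoid R] {G : SimpleGraph Ω} [DecidableRel G.Adj] {t : R} (ht : 0 ≤ t) {V : Ω → R}
    {H : Matrix Ω Ω R}
    (hH : ∀ α β, H α β = if α = β then V α else if G.Adj α β then -t else 0) :
    IsZMatrix H := by
  intro α β hαβ
  rw [hH, if_neg hαβ]
  split_ifs
  · exact neg_nonpos.2 ht
  · exact le_rfl

/-- The classically allowed region of the effective potential `1/u` at energy `E' = E + K`
is nonempty: every eigenvalue satisfies `E' ≥ min_α 1/u α`, i.e. there exists `α` with
`1/u α ≤ E'`. -/
theorem mbll_classically_allowed_nonempty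
    {Ω : Type*} [Fintype Ω] [DecidableEq Ω] [Nonempty Ω]
    (G : SimpleGraph Ω) [DecidableRel G.Adj] (hG : G.Connected)
    (t : ℝ) (ht : 0 < t) (V : Ω → ℝ) (K : ℝ)
    (H : Matrix Ω Ω ℝ)
    (hH : ∀ α β, H α β = if α = β then V α else if G.Adj α β then -t else 0)
    (hK : ∀ α, 0 ≤ K + V α - t * (G.degree α + 1))
    (u : Ω → ℝ) (hu : u = (H + K • (1 : Matrix Ω Ω ℝ))⁻¹ *ᵥ (fun _ => 1))
    (hupos : ∀ α, 0 < u α)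
    (ψ : Ω → ℝ) (hψ0 : ψ ≠ 0) (E : ℝ) (hψ : H *ᵥ ψ = E • ψ)
    (E' : ℝ) (hE' : E' = E + K) :
    ∃ α, 1 / u α ≤ E' := by
  rw [hE']
  exact mbll_classically_allowed_nonempty_general (isZMatrix_of_hopping ht.le hH) hu hupos hψ0 hψ
end
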